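/- arXiv:2011.06173 — 11 statements merged into one kernel-verified Lean document; each statement's English description precedes it below -/
import Mathlib

section
/- Let G be a finite simple graph that is 2P4-free, C5-free and C7-free, and let v1,…,v9 (indices modulo 9) be distinct vertices inducing a 9-cycle in G (v_i adjacent to v_j iff j ≡ i±1 mod 9). Let x be a vertex outside the cycle that is adjacent to at least one cycle vertex, and suppose x has a neighbor y such that y is not on the cycle and y has no neighbor on the cycle. Then there exists an index i such that x is adjacent to both v_i and v_{i+1}. -/
/-- `a b c d` form an induced path on four vertices in `G`: the vertices are
distinct, consecutive vertices are adjacent, and non-consecutive vertices are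
non-adjacent. -/
def IsInducedP4 {V : Type*} (G : SimpleGraph V) (a b c d : V) : Prop :=
  a ≠ b ∧ a ≠ c ∧ a ≠ d ∧ b ≠ c ∧ b ≠ d ∧ c ≠ d ∧
  G.Adj a b ∧ G.Adj b c ∧ G.Adj c d ∧ ¬ G.Adj a c ∧ ¬ G.Adj a d ∧ ¬ G.Adj b d

/-- `G` is `2P₄`-free: there are no eight distinct vertices forming two
induced copies of `P₄` with no edges between the two copies. -/
def TwoP4Free {V : Type*} (G : SimpleGraph V) : Prop :=
  ¬ ∃ a₁ a₂ a₃ a₄ b₁ b₂ b₃ b₄ : V,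
      IsInducedP4 G a₁ a₂ a₃ a₄ ∧ IsInducedP4 G b₁ b₂ b₃ b₄ ∧
      ∀ u ∈ ({a₁, a₂, a₃, a₄} : Set V), ∀ w ∈ ({b₁, b₂, b₃, b₄} : Set V),
        u ≠ w ∧ ¬ G.Adj u w

/-- The vertices `v 0, …, v (n-1)` (indexed by `ZMod n`) form an induced
cycle `C_n` in `G`. -/
def IsInducedCycle {V : Type*} (G : SimpleGraph V) (n : ℕ) (v : ZMod n → V) : Prop :=
  Function.Injective v ∧ ∀ i j : ZMod n, G.Adj (v i) (v j) ↔ (j = i + 1 ∨ i = j + 1)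

/-- `G` is `C_n`-free: it contains no induced cycle on `n` vertices. -/
def CycleFree {V : Type*} (G : SimpleGraph V) (n : ℕ) : Prop :=
  ¬ ∃ v : ZMod n → V, IsInducedCycle G n v

theorem shiftCycle {V : Type*} {G : SimpleGraph V} {v : ZMod 9 → V} (hv : IsInducedCycle G 9 v)
    (i : ZMod 9) : IsInducedCycle G 9 (fun a => v (i + a)) := by
  refine ⟨fun a b h => add_left_cancel (hv.1 h), fun a b => ?_⟩
  rw [hv.2, add_assoc, add_assoc, add_right_inj, add_right_inj]

theorem auxP {V : Type*} {G : SimpleGraph V} (h : TwoP4Free G) {v : ZMod 9 → V}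
    (hv : IsInducedCycle G 9 v) {x y : V} (hx : ∀ i, x ≠ v i) (hxy : G.Adj x y)
    (hy : ∀ i, y ≠ v i) (hy0 : ∀ i, ¬ G.Adj y (v i))
    (h0 : G.Adj x (v 0)) (h1 : ¬ G.Adj x (v 1)) (h3 : ¬ G.Adj x (v 3)) (h4 : ¬ G.Adj x (v 4))
    (h5 : ¬ G.Adj x (v 5)) (h6 : ¬ G.Adj x (v 6)) : False := by
  refine h ⟨y, x, v 0, v 1, v 3, v 4, v 5, v 6, ?_, ?_, ?_⟩
  · refine ⟨hxy.ne', hy _, hy _, hx _, hx _, hv.1.ne (by decide), hxy.symm, h0, ?_, hy0 _, hy0 _, h1⟩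
    rw [hv.2]; decide
  · refine ⟨?_, ?_, ?_, ?_, ?_, ?_, ?_, ?_, ?_, ?_, ?_, ?_⟩ <;>
      first
        | exact hv.1.ne (by decide) | (rw [hv.2]; decide)
  · intro u hu w hw
    simp only [Set.mem_insert_iff, Set.mem_singleton_iff] at hu hw
    rcases hu with rfl | rfl | rfl | rfl <;> rcases hw with rfl | rfl | rfl | rfl <;>
      refine ⟨?_, ?_⟩ <;>
      first
        | exact hy _ | exact hx _ | exact hy0 _ | assumption
        | exact hv.1.ne (by decide) | (rw [hv.2]; decide)

theorem aux5 {V : Type*} {G : SimpleGraph V} (h : CycleFree G 5) {v : ZMod 9 → V}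
    (hv : IsInducedCycle G 9 v) {x : V} (hx : ∀ i, x ≠ v i)
    (h0 : G.Adj x (v 0)) (h1 : ¬ G.Adj x (v 1)) (h2 : ¬ G.Adj x (v 2))
    (h3 : G.Adj x (v 3)) : False := by
  refine h ⟨(![x, v 0, v 1, v 2, v 3] : Fin 5 → V), ?_, ?_⟩
  · intro (a : Fin 5) (b : Fin 5) hab
    fin_cases a <;> fin_cases b <;>
      first
        | rfl | exact absurd hab (hx _) | exact absurd hab.symm (hx _)
        | exact absurd (hv.1 hab) (by decide)
  · suffices key : ∀ a b : Fin 5, G.Adj ((![x, v 0, v 1, v 2, v 3] : Fin 5 → V) a)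
        ((![x, v 0, v 1, v 2, v 3] : Fin 5 → V) b) ↔ (b = a + 1 ∨ a = b + 1) from key
    intro a b
    fin_cases a <;> fin_cases b <;>
      first
        | exact iff_of_true h0 (by decide) | exact iff_of_true h3 (by decide)
        | exact iff_of_true h0.symm (by decide) | exact iff_of_true h3.symm (by decide)
        | exact iff_of_false h1 (by decide) | exact iff_of_false h2 (by decide)
        | exact iff_of_false (fun t => h1 t.symm) (by decide)
        | exact iff_of_false (fun t => h2 t.symm) (by decide)
        | exact iff_of_false (G.irrefl) (by decide)
        | exact (hv.2 _ _).trans (by decide)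

theorem aux7 {V : Type*} {G : SimpleGraph V} (h : CycleFree G 7) {v : ZMod 9 → V}
    (hv : IsInducedCycle G 9 v) {x : V} (hx : ∀ i, x ≠ v i)
    (h0 : G.Adj x (v 0)) (h1 : ¬ G.Adj x (v 1)) (h2 : ¬ G.Adj x (v 2))
    (h3 : ¬ G.Adj x (v 3)) (h4 : ¬ G.Adj x (v 4)) (h5 : G.Adj x (v 5)) : False := by
  refine h ⟨(![x, v 0, v 1, v 2, v 3, v 4, v 5] : Fin 7 → V), ?_, ?_⟩
  · intro (a : Fin 7) (b : Fin 7) hab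
    fin_cases a <;> fin_cases b <;>
      first
        | rfl | exact absurd hab (hx _) | exact absurd hab.symm (hx _)
        | exact absurd (hv.1 hab) (by decide)
  · suffices key : ∀ a b : Fin 7, G.Adj ((![x, v 0, v 1, v 2, v 3, v 4, v 5] : Fin 7 → V) a)
        ((![x, v 0, v 1, v 2, v 3, v 4, v 5] : Fin 7 → V) b) ↔ (b = a + 1 ∨ a = b + 1) from key
    intro a b
    fin_cases a <;> fin_cases b <;>
      first
        | exact iff_of_true h0 (by decide) | exact iff_of_true h5 (by decide)
        | exact iff_of_true h0.symm (by decide) | exact iff_of_true h5.symm (by decide)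
        | exact iff_of_false h1 (by decide) | exact iff_of_false h2 (by decide)
        | exact iff_of_false h3 (by decide) | exact iff_of_false h4 (by decide)
        | exact iff_of_false (fun t => h1 t.symm) (by decide)
        | exact iff_of_false (fun t => h2 t.symm) (by decide)
        | exact iff_of_false (fun t => h3 t.symm) (by decide)
        | exact iff_of_false (fun t => h4 t.symm) (by decide)
        | exact iff_of_false (G.irrefl) (by decide)
        | exact (hv.2 _ _).trans (by decide)

theorem stmt0 {V : Type*} [Fintype V] (G : SimpleGraph V)
    (h2P4 : TwoP4Free G) (hC5 : CycleFree G 5) (hC7 : CycleFree G 7)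
    (v : ZMod 9 → V) (hv : IsInducedCycle G 9 v)
    (x : V) (hx : x ∉ Set.range v) (hx1 : ∃ i, G.Adj x (v i))
    (y : V) (hxy : G.Adj x y) (hyN : y ∉ Set.range v)
    (hy0 : ∀ i, ¬ G.Adj y (v i)) :
    ∃ i : ZMod 9, G.Adj x (v i) ∧ G.Adj x (v (i + 1)) := by
  have hx' : ∀ i, x ≠ v i := fun i h => hx ⟨i, h.symm⟩
  have hy' : ∀ i, y ≠ v i := fun i h => hyN ⟨i, h.symm⟩
  by_contra! hc
  obtain ⟨i, hi⟩ := hx1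
  have hP := fun j => auxP h2P4 (shiftCycle hv j) (fun _ => hx' _) hxy (fun _ => hy' _)
    (fun _ => hy0 _)
  have hF := fun j => aux5 hC5 (shiftCycle hv j) (x := x) (fun _ => hx' _)
  have hS := fun j => aux7 hC7 (shiftCycle hv j) (x := x) (fun _ => hx' _)
  generalize hp : (fun a => G.Adj x (v (i + a))) = p
  have e : ∀ a b : ZMod 9, G.Adj x (v (i + a + b)) = p (a + b) := by
    intro a b; rw [← hp, add_assoc]
  have h0 : p 0 := by rw [← hp]; simpa using hi
  have hc' : ∀ a, p a → ¬ p (a + 1) := by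
    intro a h; rw [← e]; rw [← hp] at h; exact hc _ h
  have hP' := fun a => hP (i + a)
  have hF' := fun a => hF (i + a)
  have hS' := fun a => hS (i + a)
  simp only [e] at hP' hF' hS'
  clear hP hF hS hp e hc
  have c0 : ¬ p 1 := hc' 0 h0
  have c1 : p 2 → ¬ p 3 := hc' 2
  have c2 : p 3 → ¬ p 4 := hc' 3
  have c3 : p 4 → ¬ p 5 := hc' 4
  have c4 : p 5 → ¬ p 6 := hc' 5
  have c5 : p 6 → ¬ p 7 := hc' 6
  have c6 : ¬ p 8 := fun h => hc' 8 h h0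
  have P0 : p 0 → ¬ p 1 → ¬ p 3 → ¬ p 4 → ¬ p 5 → ¬ p 6 → False := hP' 0
  have P1 : p 2 → ¬ p 3 → ¬ p 5 → ¬ p 6 → ¬ p 7 → ¬ p 8 → False := hP' 2
  have P7 : p 7 → ¬ p 8 → ¬ p 1 → ¬ p 2 → ¬ p 3 → ¬ p 4 → False := hP' 7
  have F0 : p 0 → ¬ p 1 → ¬ p 2 → p 3 → False := hF' 0
  have F2 : p 2 → ¬ p 3 → ¬ p 4 → p 5 → False := hF' 2
  have F3 : p 3 → ¬ p 4 → ¬ p 5 → p 6 → False := hF' 3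
  have F4 : p 4 → ¬ p 5 → ¬ p 6 → p 7 → False := hF' 4
  have F6 : p 6 → ¬ p 7 → ¬ p 8 → p 0 → False := hF' 6
  have S0 : p 0 → ¬ p 1 → ¬ p 2 → ¬ p 3 → ¬ p 4 → p 5 → False := hS' 0
  have S2 : p 2 → ¬ p 3 → ¬ p 4 → ¬ p 5 → ¬ p 6 → p 7 → False := hS' 2
  have S4 : p 4 → ¬ p 5 → ¬ p 6 → ¬ p 7 → ¬ p 8 → p 0 → False := hS' 4
  clear hc' hP' hF' hS'
  have n3 : ¬ p 3 := fun h => F0 h0 c0 (fun h2 => c1 h2 h) h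
  have n6 : ¬ p 6 := fun h => F6 h (c5 h) c6 h0
  have n5 : ¬ p 5 := fun h => by
    have n4 : ¬ p 4 := fun h4 => c3 h4 h
    exact S0 h0 c0 (fun h2 => F2 h2 n3 n4 h) n3 n4 h
  have n4 : ¬ p 4 := fun h => S4 h n5 n6 (fun h7 => F4 h n5 n6 h7) c6 h0
  exact P0 h0 c0 n3 n4 n5 n6
end

section
/- Let G be a finite simple graph that is C5-free, let v1,…,v7 induce a C7 in G with vertex set N0, and let x be a vertex outside N0 with at least one neighbor in N0. Suppose there is no index i such that x is adjacent to both v_i and v_{i+1}. Then there exists an index i such that N0(x) = {v_i} or N0(x) = {v_i, v_{i+2}}. -/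
theorem stmt1 {V : Type*} [Fintype V] (G : SimpleGraph V)
    (hC5 : CycleFree G 5)
    (v : ZMod 7 → V) (hv : IsInducedCycle G 7 v)
    (x : V) (hx : x ∉ Set.range v) (hx1 : ∃ i, G.Adj x (v i))
    (hcons : ¬ ∃ i : ZMod 7, G.Adj x (v i) ∧ G.Adj x (v (i + 1))) :
    ∃ i : ZMod 7,
      {u | u ∈ Set.range v ∧ G.Adj x u} = {v i} ∨
      {u | u ∈ Set.range v ∧ G.Adj x u} = {v i, v (i + 2)} := by
  obtain ⟨hinj, hadj⟩ := hv
  have hne : ∀ i, x ≠ v i := fun i h => hx ⟨i, h.symm⟩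
  have h1 : ∀ i, G.Adj x (v i) → ¬ G.Adj x (v (i + 1)) := fun i a b => hcons ⟨i, a, b⟩
  have h3 : ∀ i, G.Adj x (v i) → ¬ G.Adj x (v (i + 3)) := by
    intro i a b
    have n1 : ¬ G.Adj x (v (i + 1)) := h1 i a
    have n2 : ¬ G.Adj x (v (i + 2)) := by
      intro c
      have := h1 _ c
      rw [add_assoc] at this
      exact this b
    apply hC5
    let w : Fin 5 → V := ![x, v i, v (i + 1), v (i + 2), v (i + 3)]
    refine ⟨w, ?_, ?_⟩
    · have key : ∀ p q : Fin 5, w p = w q → p = q := by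
        have d : ∀ i : ZMod 7, i ≠ i + 1 ∧ i ≠ i + 2 ∧ i ≠ i + 3 ∧ i + 1 ≠ i + 2 ∧
          i + 1 ≠ i + 3 ∧ i + 2 ≠ i + 3 := by decide
        obtain ⟨d1, d2, d3, d4, d5, d6⟩ := d i
        intro p q
        fin_cases p <;> fin_cases q <;>
          simp [w, hne, (hne _).symm, hinj.eq_iff, d4, d5, d6, d4.symm, d5.symm, d6.symm] <;>
          decide
      exact key
    · have key : ∀ p q : Fin 5, G.Adj (w p) (w q) ↔ (q = p + 1 ∨ p = q + 1) := by
        intro p q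
        have a' := a.symm
        have b' := b.symm
        have n1' : ¬ G.Adj (v (i + 1)) x := fun h => n1 h.symm
        have n2' : ¬ G.Adj (v (i + 2)) x := fun h => n2 h.symm
        fin_cases p <;> fin_cases q <;>
          simp [w, a, b, n1, n2, a', b', n1', n2', hadj] <;> clear * - <;> decide +revert
      exact key
  obtain ⟨i, hi⟩ := hx1
  have hset : ∀ s : Set (ZMod 7), (∀ j, G.Adj x (v j) ↔ j ∈ s) →
      {u | u ∈ Set.range v ∧ G.Adj x u} = v '' s := by
    intro s hs
    ext u
    constructor
    · rintro ⟨⟨j, rfl⟩, h⟩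
      exact ⟨j, (hs j).1 h, rfl⟩
    · rintro ⟨j, h, rfl⟩
      exact ⟨⟨j, rfl⟩, (hs j).2 h⟩
  have back : ∀ k l : ZMod 7, l + k = i → (∀ j, G.Adj x (v j) → ¬ G.Adj x (v (j + k))) →
      ¬ G.Adj x (v l) := by
    intro k l e h c
    apply h l c
    rw [e]
    exact hi
  have m1 := h1 i hi
  have m3 := h3 i hi
  have this4 : ∀ i : ZMod 7, i + 4 + 3 = i := by decide
  have this6 : ∀ i : ZMod 7, i + 6 + 1 = i := by decide
  have m4 := back 3 (i + 4) (this4 i) h3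
  have m6 := back 1 (i + 6) (this6 i) h1
  have cases7 : ∀ i j : ZMod 7, j = i ∨ j = i + 1 ∨ j = i + 2 ∨ j = i + 3 ∨ j = i + 4 ∨
    j = i + 5 ∨ j = i + 6 := by decide
  by_cases c2 : G.Adj x (v (i + 2))
  · have m5 : ¬ G.Adj x (v (i + 5)) := by
      have := h3 _ c2
      rwa [add_assoc] at this
    refine ⟨i, Or.inr ?_⟩
    rw [hset {i, i + 2}, Set.image_pair]
    intro j
    constructor
    · intro h
      rcases cases7 i j with rfl | rfl | rfl | rfl | rfl | rfl | rfl <;> simp_all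
    · rintro (rfl | rfl) <;> assumption
  by_cases c5 : G.Adj x (v (i + 5))
  · refine ⟨i + 5, Or.inr ?_⟩
    have e : i + 5 + 2 = i := by
      have : ∀ i : ZMod 7, i + 5 + 2 = i := by decide
      exact this i
    rw [e, hset {i + 5, i}, Set.image_pair]
    intro j
    constructor
    · intro h
      rcases cases7 i j with rfl | rfl | rfl | rfl | rfl | rfl | rfl <;> simp_all
    · rintro (rfl | rfl) <;> assumption
  · refine ⟨i, Or.inl ?_⟩
    rw [hset {i}, Set.image_singleton]
    intro j
    constructor
    · intro h
      rcases cases7 i j with rfl | rfl | rfl | rfl | rfl | rfl | rfl <;> simp_all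
    · rintro rfl
      assumption
end

section
/- Let G be a finite simple graph that is 2P4-free, let v1,…,v7 induce a C7 in G with vertex set N0, and suppose that every vertex x outside N0 having a neighbor in N0 satisfies N0(x) = {v_i} or N0(x) = {v_i, v_{i+2}} for some index i. Then every induced path on 4 vertices in G contains at most two vertices of N2 (the set of vertices outside N0 with no neighbor in N0). -/
theorem aux {V : Type*} (G : SimpleGraph V) (h2P4 : TwoP4Free G)
    (v : ZMod 7 → V) (hv : IsInducedCycle G 7 v)
    (hN1 : ∀ x, x ∉ Set.range v → (∃ i, G.Adj x (v i)) →
      ∃ i : ZMod 7, {u | u ∈ Set.range v ∧ G.Adj x u} = {v i} ∨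
        {u | u ∈ Set.range v ∧ G.Adj x u} = {v i, v (i + 2)})
    (a b c d : V) (hP : IsInducedP4 G a b c d) (x : V)
    (hx : ∀ y, (y = a ∨ y = b ∨ y = c ∨ y = d) → y ≠ x →
      y ∉ Set.range v ∧ ∀ i, ¬ G.Adj y (v i)) : False := by
  have hr : ∀ y, (y = a ∨ y = b ∨ y = c ∨ y = d) → y ∉ Set.range v := by
    rintro y hy ⟨j, hj⟩
    have hyx : y = x := by
      by_contra h
      exact (hx y hy h).1 ⟨j, hj⟩
    have hn : ∃ z, (z = a ∨ z = b ∨ z = c ∨ z = d) ∧ G.Adj z y := by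
      obtain ⟨-, -, -, -, -, -, h1, h2, h3, -⟩ := hP
      rcases hy with rfl | rfl | rfl | rfl
      · exact ⟨b, by simp, h1.symm⟩
      · exact ⟨a, by simp, h1⟩
      · exact ⟨d, by simp, h3.symm⟩
      · exact ⟨c, by simp, h3⟩
    obtain ⟨z, hz, hzy⟩ := hn
    exact (hx z hz (hyx ▸ hzy.ne)).2 j (hj ▸ hzy)
  have hi : ∃ i : ZMod 7, ∀ y, (y = a ∨ y = b ∨ y = c ∨ y = d) →
      ∀ j, G.Adj y (v j) → j = i ∨ j = i + 2 := by
    by_cases h : (x = a ∨ x = b ∨ x = c ∨ x = d) ∧ ∃ i, G.Adj x (v i)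
    · obtain ⟨i, hi⟩ := hN1 x (hr x h.1) h.2
      refine ⟨i, fun y hy j hj => ?_⟩
      by_cases hyx : y = x
      · subst hyx
        have hm : v j ∈ {u | u ∈ Set.range v ∧ G.Adj y u} := ⟨⟨j, rfl⟩, hj⟩
        rcases hi with hi | hi
        · rw [hi] at hm
          exact Or.inl (hv.1 hm)
        · rw [hi] at hm
          rcases hm with hm | hm
          · exact Or.inl (hv.1 hm)
          · exact Or.inr (hv.1 hm)
      · exact absurd hj ((hx y hy hyx).2 j)
    · refine ⟨0, fun y hy j hj => ?_⟩
      by_cases hyx : y = x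
      · subst hyx
        exact absurd ⟨hy, j, hj⟩ h
      · exact absurd hj ((hx y hy hyx).2 j)
  obtain ⟨i, hi⟩ := hi
  refine h2P4 ⟨a, b, c, d, v (i + 3), v (i + 4), v (i + 5), v (i + 6), hP, ?_, ?_⟩
  · simp only [IsInducedP4, ne_eq, hv.1.eq_iff, hv.2]
    clear hi
    revert i
    decide
  · intro u hu w hw
    have hu' : u = a ∨ u = b ∨ u = c ∨ u = d := hu
    have hw' : ∃ j, w = v j ∧ ¬ (j = i ∨ j = i + 2) := by
      have e : ∀ i : ZMod 7, ¬ (i + 3 = i ∨ i + 3 = i + 2) ∧ ¬ (i + 4 = i ∨ i + 4 = i + 2) ∧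
        ¬ (i + 5 = i ∨ i + 5 = i + 2) ∧ ¬ (i + 6 = i ∨ i + 6 = i + 2) := by decide
      obtain ⟨e1, e2, e3, e4⟩ := e i
      rcases hw with h | h | h | h
      exacts [⟨_, h, e1⟩, ⟨_, h, e2⟩, ⟨_, h, e3⟩, ⟨_, h, e4⟩]
    obtain ⟨j, rfl, hj⟩ := hw'
    exact ⟨fun h => hr u hu' ⟨j, h.symm⟩, fun h => hj (hi u hu' j h)⟩

theorem stmt2 {V : Type*} [Fintype V] (G : SimpleGraph V) (h2P4 : TwoP4Free G)
    (v : ZMod 7 → V) (hv : IsInducedCycle G 7 v)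
    (hN1 : ∀ x, x ∉ Set.range v → (∃ i, G.Adj x (v i)) →
      ∃ i : ZMod 7, {u | u ∈ Set.range v ∧ G.Adj x u} = {v i} ∨
        {u | u ∈ Set.range v ∧ G.Adj x u} = {v i, v (i + 2)})
    (a b c d : V) (hP : IsInducedP4 G a b c d) :
    (({a, b, c, d} : Set V) ∩ {u | u ∉ Set.range v ∧ ∀ i, ¬ G.Adj u (v i)}).ncard ≤ 2 := by
  have key := aux G h2P4 v hv hN1 a b c d hP
  set S : Set V := {u | u ∉ Set.range v ∧ ∀ i, ¬ G.Adj u (v i)} with hS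
  have fin : ∀ p q : V, (({a, b, c, d} : Set V) ∩ S) ⊆ {p, q} →
      (({a, b, c, d} : Set V) ∩ S).ncard ≤ 2 := fun p q h =>
    (Set.ncard_le_ncard h (Set.toFinite _)).trans (Set.ncard_insert_le p {q} |>.trans (by rw [Set.ncard_singleton]))
  by_contra hcon
  have fin' : ∀ p q : V, ¬ ∀ y, (y = a ∨ y = b ∨ y = c ∨ y = d) → y ∈ S → y = p ∨ y = q := by
    intro p q h
    refine hcon (fin p q ?_)
    rintro y ⟨hy, hyS⟩
    exact h y hy hyS
  have hmem : ∀ y, y ∈ S → y ∉ Set.range v ∧ ∀ i, ¬ G.Adj y (v i) := fun y h => h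
  by_cases ha : a ∈ S
  · by_cases hb : b ∈ S
    · by_cases hc : c ∈ S
      · exact key d (by rintro y (rfl | rfl | rfl | rfl) hy <;> first | exact hmem _ ‹_› | exact absurd rfl hy)
      · by_cases hd : d ∈ S
        · exact key c (by rintro y (rfl | rfl | rfl | rfl) hy <;> first | exact hmem _ ‹_› | exact absurd rfl hy)
        · exact fin' a b (by rintro y (rfl | rfl | rfl | rfl) hy <;> first | contradiction | simp)
    · by_cases hc : c ∈ S
      · by_cases hd : d ∈ S
        · exact key b (by rintro y (rfl | rfl | rfl | rfl) hy <;> first | exact hmem _ ‹_› | exact absurd rfl hy)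
        · exact fin' a c (by rintro y (rfl | rfl | rfl | rfl) hy <;> first | contradiction | simp)
      · exact fin' a d (by rintro y (rfl | rfl | rfl | rfl) hy <;> first | contradiction | simp)
  · by_cases hb : b ∈ S
    · by_cases hc : c ∈ S
      · by_cases hd : d ∈ S
        · exact key a (by rintro y (rfl | rfl | rfl | rfl) hy <;> first | exact hmem _ ‹_› | exact absurd rfl hy)
        · exact fin' b c (by rintro y (rfl | rfl | rfl | rfl) hy <;> first | contradiction | simp)
      · exact fin' b d (by rintro y (rfl | rfl | rfl | rfl) hy <;> first | contradiction | simp)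
    · exact fin' c d (by rintro y (rfl | rfl | rfl | rfl) hy <;> first | contradiction | simp)
end

section
/- Let G be a finite simple graph that is 2P4-free, let v1,…,v7 induce a C7 in G with vertex set N0, and let x be a vertex outside N0 such that N0(x) = {v_i} or N0(x) = {v_i, v_{i+2}} for some index i. Let C be a connected component of the subgraph of G induced by N2, and suppose x is adjacent to at least one but not all vertices of C. Then x has no neighbor in N2∖C, and moreover |N0(x)| = 2. -/
/-- `C` is a connected component of the subgraph of `G` induced by `S`:
it is a nonempty subset of `S` inducing a connected graph, and it is closed
under adjacency within `S`. -/
def IsCompOf {V : Type*} (G : SimpleGraph V) (S C : Set V) : Prop :=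
  C.Nonempty ∧ C ⊆ S ∧ (G.induce C).Connected ∧
  ∀ u ∈ C, ∀ w ∈ S, G.Adj u w → w ∈ C

theorem aux_key {V : Type*} (G : SimpleGraph V) (h2P4 : TwoP4Free G)
    (v : ZMod 7 → V) (hv : IsInducedCycle G 7 v) (j : ZMod 7) (b a x y : V)
    (hba : G.Adj b a) (hax : G.Adj a x) (hxy : G.Adj x y) (hbx : ¬ G.Adj b x)
    (hby : ¬ G.Adj b y) (hay : ¬ G.Adj a y)
    (H : ∀ u ∈ ({b, a, x, y} : Set V), ∀ w ∈ ({v j, v (j+1), v (j+2), v (j+3)} : Set V),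
        u ≠ w ∧ ¬ G.Adj u w) : False := by
  apply h2P4
  refine ⟨b, a, x, y, v j, v (j+1), v (j+2), v (j+3), ?_, ?_, H⟩
  · refine ⟨hba.ne, ?_, ?_, hax.ne, ?_, hxy.ne, hba, hax, hxy, hbx, hby, hay⟩
    · rintro rfl; exact hby hxy
    · rintro rfl; exact hay hba.symm
    · rintro rfl; exact hby hba
  · unfold IsInducedP4
    simp only [hv.2, hv.1.ne_iff, ne_eq]
    clear H
    revert j
    decide

theorem aux_edge {V : Type*} (G : SimpleGraph V) (C : Set V) (x : V)
    (hC : (G.induce C).Connected)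
    (h1 : ∃ u ∈ C, G.Adj x u) (h2 : ∃ u ∈ C, ¬ G.Adj x u) :
    ∃ a ∈ C, ∃ b ∈ C, G.Adj b a ∧ G.Adj x a ∧ ¬ G.Adj x b := by
  by_contra hcon
  push Not at hcon
  obtain ⟨u, hu, hxu⟩ := h1
  obtain ⟨w, hw, hxw⟩ := h2
  obtain ⟨p⟩ := hC.preconnected ⟨u, hu⟩ ⟨w, hw⟩
  have key : ∀ (s t : C), (G.induce C).Walk s t → G.Adj x s → G.Adj x t := by
    intro s t p
    induction p with
    | nil => exact id
    | cons h p ih =>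
      intro hs
      exact ih (hcon _ (Subtype.property _) _ (Subtype.property _) (G.adj_symm h) hs)
  exact hxw (key _ _ p hxu)

theorem stmt3 {V : Type*} [Fintype V] (G : SimpleGraph V) (h2P4 : TwoP4Free G)
    (v : ZMod 7 → V) (hv : IsInducedCycle G 7 v)
    (N2 : Set V) (hN2 : N2 = {u | u ∉ Set.range v ∧ ∀ i, ¬ G.Adj u (v i)})
    (x : V) (hx : x ∉ Set.range v)
    (hxN0 : ∃ i : ZMod 7, {u | u ∈ Set.range v ∧ G.Adj x u} = {v i} ∨
      {u | u ∈ Set.range v ∧ G.Adj x u} = {v i, v (i + 2)})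
    (C : Set V) (hC : IsCompOf G N2 C)
    (h1 : ∃ u ∈ C, G.Adj x u) (h2 : ∃ u ∈ C, ¬ G.Adj x u) :
    (∀ w ∈ N2 \ C, ¬ G.Adj x w) ∧
      {u | u ∈ Set.range v ∧ G.Adj x u}.ncard = 2 := by
  obtain ⟨-, hCN, hconn, hclosed⟩ := hC
  obtain ⟨a, ha, b, hb, hba, hxa, hxb⟩ := aux_edge G C x hconn h1 h2
  have hN : ∀ u ∈ N2, u ∉ Set.range v ∧ ∀ i, ¬ G.Adj u (v i) := by
    intro u hu; rw [hN2] at hu; exact hu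
  have hNv : ∀ u ∈ N2, ∀ i, u ≠ v i ∧ ¬ G.Adj u (v i) := fun u hu i =>
    ⟨fun h => (hN u hu).1 ⟨i, h.symm⟩, (hN u hu).2 i⟩
  have hxv : ∀ i, x ≠ v i := fun i h => hx ⟨i, h.symm⟩
  obtain ⟨i, hi | hi⟩ := hxN0
  · exfalso
    have hadj : ∀ k, G.Adj x (v k) ↔ k = i := by
      intro k
      have := Set.ext_iff.1 hi (v k)
      simpa [hv.1.eq_iff] using this
    refine aux_key G h2P4 v hv (i+2) b a x (v i) hba hxa.symm ((hadj i).2 rfl)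
      (fun h => hxb h.symm) (hNv b (hCN hb) i).2 (hNv a (hCN ha) i).2 ?_
    have hd : ∀ k ∈ ({i+2, i+2+1, i+2+2, i+2+3} : Set (ZMod 7)),
        k ≠ i ∧ ¬ (k = i + 1 ∨ i = k + 1) := by
      simp only [Set.mem_insert_iff, Set.mem_singleton_iff]
      clear hi hadj
      revert i; decide
    have hw : ∀ k ∈ ({i+2, i+2+1, i+2+2, i+2+3} : Set (ZMod 7)),
        ∀ u ∈ ({b, a, x, v i} : Set V), u ≠ v k ∧ ¬ G.Adj u (v k) := by
      rintro k hk u (rfl | rfl | rfl | rfl)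
      · exact hNv _ (hCN hb) k
      · exact hNv _ (hCN ha) k
      · exact ⟨hxv k, fun h => (hd k hk).1 ((hadj k).1 h)⟩
      · exact ⟨fun h => (hd k hk).1 (hv.1 h).symm, fun h => (hd k hk).2 ((hv.2 _ _).1 h)⟩
    rintro u hu w (rfl | rfl | rfl | rfl) <;> exact hw _ (by simp) u hu
  · have hadj : ∀ k, G.Adj x (v k) ↔ k = i ∨ k = i + 2 := by
      intro k
      have := Set.ext_iff.1 hi (v k)
      simpa [hv.1.eq_iff] using this
    constructor
    · rintro y ⟨hyN, hyC⟩ hxy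
      refine aux_key G h2P4 v hv (i+3) b a x y hba hxa.symm hxy
        (fun h => hxb h.symm) (fun h => hyC (hclosed b hb y hyN h))
        (fun h => hyC (hclosed a ha y hyN h)) ?_
      have hd : ∀ k ∈ ({i+3, i+3+1, i+3+2, i+3+3} : Set (ZMod 7)),
          ¬ (k = i ∨ k = i + 2) := by
        simp only [Set.mem_insert_iff, Set.mem_singleton_iff]
        clear hi hadj
        revert i; decide
      have hw : ∀ k ∈ ({i+3, i+3+1, i+3+2, i+3+3} : Set (ZMod 7)),
          ∀ u ∈ ({b, a, x, y} : Set V), u ≠ v k ∧ ¬ G.Adj u (v k) := by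
        rintro k hk u (rfl | rfl | rfl | rfl)
        · exact hNv _ (hCN hb) k
        · exact hNv _ (hCN ha) k
        · exact ⟨hxv k, fun h => hd k hk ((hadj k).1 h)⟩
        · exact hNv _ hyN k
      rintro u hu w (rfl | rfl | rfl | rfl) <;> exact hw _ (by simp) u hu
    · rw [hi]
      apply Set.ncard_pair
      rw [hv.1.ne_iff]
      clear hi hadj
      revert i; decide
end

section
/- Let G be a finite simple graph that is 2P4-free, and let v be a vertex of G such that the subgraph induced by the neighborhood N(v) is connected and bipartite with nonempty partite classes X and Y. Let G* be the neighborhood collapse of v: the graph whose vertex set is (V(G)∖(X∪Y)) together with two new vertices x and y, where two old vertices are adjacent in G* iff they are adjacent in G, x is adjacent to y, x is adjacent to an old vertex a iff some vertex of X is adjacent to a in G, and y is adjacent to an old vertex a iff some vertex of Y is adjacent to a in G. Then G* is 2P4-free. -/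
/-- Adjacency relation of the neighborhood collapse of `G` with respect to the
partite classes `X` and `Y`: the old vertices are those outside `X ∪ Y`, the
new vertex `Sum.inr false` plays the role of `x` (the collapse of `X`) and
`Sum.inr true` plays the role of `y` (the collapse of `Y`). -/
def collapseAdj {V : Type*} (G : SimpleGraph V) (X Y : Set V) :
    ({a : V // a ∉ X ∪ Y} ⊕ Bool) → ({a : V // a ∉ X ∪ Y} ⊕ Bool) → Prop
  | Sum.inl a, Sum.inl b => G.Adj a.1 b.1
  | Sum.inl a, Sum.inr b => if b then ∃ u ∈ Y, G.Adj u a.1 else ∃ u ∈ X, G.Adj u a.1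
  | Sum.inr b, Sum.inl a => if b then ∃ u ∈ Y, G.Adj u a.1 else ∃ u ∈ X, G.Adj u a.1
  | Sum.inr b, Sum.inr b' => b ≠ b'

/-- The neighborhood collapse of `G`: `X` and `Y` are replaced by the two
adjacent new vertices `Sum.inr false` and `Sum.inr true`. -/
def collapse {V : Type*} (G : SimpleGraph V) (X Y : Set V) :
    SimpleGraph ({a : V // a ∉ X ∪ Y} ⊕ Bool) where
  Adj := collapseAdj G X Y
  symm := by
    refine ⟨?_⟩
    rintro (a | b) (a' | b') h
    · exact G.adj_symm h
    · exact h
    · exact h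
    · exact Ne.symm h
  loopless := by
    refine ⟨?_⟩
    rintro (a | b) h
    · exact G.loopless.irrefl a.1 h
    · exact h rfl

theorem mkP4 {V : Type*} {G : SimpleGraph V} {a b c d : V} (h1 : G.Adj a b) (h2 : G.Adj b c)
    (h3 : G.Adj c d) (h4 : ¬ G.Adj a c) (h5 : ¬ G.Adj a d) (h6 : ¬ G.Adj b d) :
    IsInducedP4 G a b c d := by
  refine ⟨h1.ne, ?_, ?_, h2.ne, ?_, h3.ne, h1, h2, h3, h4, h5, h6⟩
  · rintro rfl; exact h5 h3
  · rintro rfl; exact h4 h3.symm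
  · rintro rfl; exact h5 h1

theorem P4rev {V : Type*} {G : SimpleGraph V} {a b c d : V} (h : IsInducedP4 G a b c d) :
    IsInducedP4 G d c b a := by
  obtain ⟨_, _, _, _, _, _, h1, h2, h3, h4, h5, h6⟩ := h
  exact mkP4 h3.symm h2.symm h1.symm (fun h => h6 h.symm) (fun h => h5 h.symm) (fun h => h4 h.symm)

/-- there is an induced P4 inside `P` -/
def HasP4 {V : Type*} (G : SimpleGraph V) (P : V → Prop) : Prop :=
  ∃ a b c d, IsInducedP4 G a b c d ∧ P a ∧ P b ∧ P c ∧ P d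

theorem lem_end {V : Type*} {G : SimpleGraph V} {P : V → Prop} {W : Set V} {p q r : V}
    (hW : ∀ u ∈ W, P u) (hp : P p) (hq : P q) (hr : P r)
    (h1 : ∃ u ∈ W, G.Adj u p) (h2 : G.Adj p q) (h3 : G.Adj q r)
    (h4 : ¬ ∃ u ∈ W, G.Adj u q) (h5 : ¬ ∃ u ∈ W, G.Adj u r) (h6 : ¬ G.Adj p r) : HasP4 G P := by
  obtain ⟨u, hu, hup⟩ := h1
  exact ⟨u, p, q, r, mkP4 hup h2 h3 (fun h => h4 ⟨u, hu, h⟩) (fun h => h5 ⟨u, hu, h⟩) h6,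
    hW u hu, hp, hq, hr⟩

theorem lem_int {V : Type*} {G : SimpleGraph V} {P : V → Prop} {W : Set V} {v q r : V}
    (hv : P v) (hW : ∀ u ∈ W, P u) (hq : P q) (hr : P r) (hvW : ∀ u ∈ W, G.Adj v u)
    (h1 : ∃ u ∈ W, G.Adj u q) (h2 : G.Adj q r) (h3 : ¬ ∃ u ∈ W, G.Adj u r)
    (hvq : ¬ G.Adj v q) (hvr : ¬ G.Adj v r) : HasP4 G P := by
  obtain ⟨u, hu, huq⟩ := h1
  exact ⟨v, u, q, r, mkP4 (hvW u hu) huq h2 hvq hvr (fun h => h3 ⟨u, hu, h⟩),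
    hv, hW u hu, hq, hr⟩

theorem lem_mid {V : Type*} {G : SimpleGraph V} {P : V → Prop} {X Y : Set V} {v p q : V}
    (hpart : X ∪ Y = G.neighborSet v) (hdisj : Disjoint X Y)
    (hbip : ∀ a b, G.Adj v a → G.Adj v b → G.Adj a b →
      (a ∈ X ∧ b ∈ Y) ∨ (a ∈ Y ∧ b ∈ X))
    (hconn : (G.induce (G.neighborSet v)).Connected)
    (hX : ∀ u ∈ X, P u) (hY : ∀ u ∈ Y, P u) (hp : P p) (hq : P q)
    (h1 : ∃ u ∈ X, G.Adj u p) (h2 : ∃ u ∈ Y, G.Adj u q)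
    (h3 : ¬ ∃ u ∈ Y, G.Adj u p) (h4 : ¬ ∃ u ∈ X, G.Adj u q) (h5 : ¬ G.Adj p q) : HasP4 G P := by
  have hmem : ∀ u, G.Adj v u ↔ u ∈ X ∨ u ∈ Y := by
    intro u
    have : u ∈ X ∪ Y ↔ u ∈ G.neighborSet v := by rw [hpart]
    simpa using this.symm
  have hd : ∀ u, u ∈ X → u ∈ Y → False := fun u a b => Set.disjoint_left.1 hdisj a b
  obtain ⟨s, hs, hsp⟩ := h1
  obtain ⟨t, ht, htq⟩ := h2
  by_cases hst : ∃ s ∈ X, G.Adj s p ∧ G.Adj s t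
  · obtain ⟨s, hs, hsp, hst⟩ := hst
    exact ⟨p, s, t, q, mkP4 hsp.symm hst htq (fun h => h3 ⟨t, ht, h.symm⟩) h5
      (fun h => h4 ⟨s, hs, h⟩), hp, hX s hs, hY t ht, hq⟩
  let S : Set (G.neighborSet v) := {w | G.Adj w.1 p ∨ ∃ s ∈ X, G.Adj s p ∧ G.Adj s w.1}
  obtain ⟨w⟩ := hconn.preconnected ⟨s, (hmem s).2 (.inl hs)⟩ ⟨t, (hmem t).2 (.inr ht)⟩
  obtain ⟨d, -, hd1, hd2⟩ := w.exists_boundary_dart S (.inl hsp) (by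
    rintro (h | h)
    · exact h3 ⟨t, ht, h⟩
    · exact hst h)
  obtain ⟨⟨⟨w, hw⟩, ⟨z, hz⟩⟩, hwz⟩ := d
  simp only [SimpleGraph.comap_adj, Function.Embedding.subtype_apply] at hwz
  change G.Adj w z at hwz
  simp only [S, Set.mem_setOf_eq, not_or] at hd1 hd2
  rcases hd1 with h | ⟨s', hs', hsp', hsw⟩
  · exfalso
    have : w ∈ X := ((hmem w).1 hw).resolve_right (fun hh => h3 ⟨w, hh, h⟩)
    exact hd2.2 ⟨w, this, h, hwz⟩
  · have hwY : w ∈ Y := by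
      rcases hbip s' w ((hmem _).2 (.inl hs')) hw hsw with h | h
      · exact h.2
      · exact (hd _ hs' h.1).elim
    have hzX : z ∈ X := by
      rcases hbip w z hw hz hwz with h | h
      · exact (hd _ h.1 hwY).elim
      · exact h.2
    refine ⟨p, s', w, z, mkP4 hsp'.symm hsw hwz (fun h => h3 ⟨w, hwY, h.symm⟩)
      (fun h => hd2.1 h.symm) (fun h => ?_), hp, hX _ hs', hY _ hwY, hX _ hzX⟩
    rcases hbip s' z ((hmem _).2 (.inl hs')) hz h with h | h
    · exact hd _ hzX h.2
    · exact hd _ hs' h.1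

section
variable {V : Type*} (G : SimpleGraph V) (X Y : Set V)
theorem c_ll (a b : {a : V // a ∉ X ∪ Y}) :
    (collapse G X Y).Adj (.inl a) (.inl b) ↔ G.Adj a.1 b.1 := Iff.rfl
theorem c_lx (a : {a : V // a ∉ X ∪ Y}) :
    (collapse G X Y).Adj (.inl a) (.inr false) ↔ ∃ u ∈ X, G.Adj u a.1 := by
  simp [collapse, collapseAdj]
theorem c_ly (a : {a : V // a ∉ X ∪ Y}) :
    (collapse G X Y).Adj (.inl a) (.inr true) ↔ ∃ u ∈ Y, G.Adj u a.1 := by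
  simp [collapse, collapseAdj]
theorem c_xl (a : {a : V // a ∉ X ∪ Y}) :
    (collapse G X Y).Adj (.inr false) (.inl a) ↔ ∃ u ∈ X, G.Adj u a.1 := by
  simp [collapse, collapseAdj]
theorem c_yl (a : {a : V // a ∉ X ∪ Y}) :
    (collapse G X Y).Adj (.inr true) (.inl a) ↔ ∃ u ∈ Y, G.Adj u a.1 := by
  simp [collapse, collapseAdj]
theorem c_rr (a b : Bool) :
    (collapse G X Y).Adj (.inr a) (.inr b) ↔ a ≠ b := Iff.rfl
end

theorem key {V : Type*} {G : SimpleGraph V} {P : V → Prop} {v : V} {X Y : Set V}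
    (hpart : X ∪ Y = G.neighborSet v) (hdisj : Disjoint X Y)
    (hbip : ∀ a b, G.Adj v a → G.Adj v b → G.Adj a b →
      (a ∈ X ∧ b ∈ Y) ∨ (a ∈ Y ∧ b ∈ X))
    (hconn : (G.induce (G.neighborSet v)).Connected)
    {a b c d : {a : V // a ∉ X ∪ Y} ⊕ Bool} (hA : IsInducedP4 (collapse G X Y) a b c d)
    (Q : {a : V // a ∉ X ∪ Y} ⊕ Bool → Prop)
    (hQ : Q a ∧ Q b ∧ Q c ∧ Q d)
    (hl : ∀ a, Q (.inl a) → P a.1)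
    (hx : Q (.inr false) → P v ∧ ∀ u ∈ X, P u)
    (hy : Q (.inr true) → P v ∧ ∀ u ∈ Y, P u) : HasP4 G P := by
  have hmem : ∀ u, G.Adj v u ↔ u ∈ X ∨ u ∈ Y := by
    intro u
    have : u ∈ X ∪ Y ↔ u ∈ G.neighborSet v := by rw [hpart]
    simpa using this.symm
  have hvX : ∀ u ∈ X, G.Adj v u := fun u h => (hmem u).2 (.inl h)
  have hvY : ∀ u ∈ Y, G.Adj v u := fun u h => (hmem u).2 (.inr h)
  have hno : ∀ a : {a : V // a ∉ X ∪ Y}, ¬ G.Adj v a.1 := fun a h => a.2 ((hmem _).1 h)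
  have hpart' : Y ∪ X = G.neighborSet v := by rw [Set.union_comm]; exact hpart
  have hbip' : ∀ a b, G.Adj v a → G.Adj v b → G.Adj a b →
      (a ∈ Y ∧ b ∈ X) ∨ (a ∈ X ∧ b ∈ Y) := fun a b h1 h2 h3 => (hbip a b h1 h2 h3).symm
  obtain ⟨qa, qb, qc, qd⟩ := hQ
  obtain ⟨n1, n2, n3, n4, n5, n6, e1, e2, e3, f1, f2, f3⟩ := hA
  rcases a with a | _ | _ <;> rcases b with b | _ | _ <;>
  first
  | exact absurd rfl n1
  | (rcases c with c | _ | _ <;>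
    first
    | exact absurd rfl n2
    | exact absurd rfl n4
    | (rcases d with d | _ | _ <;>
      first
      | exact absurd rfl n3
      | exact absurd rfl n5
      | exact absurd rfl n6
      | skip))
  all_goals simp only [c_ll, c_lx, c_ly, c_xl, c_yl, c_rr] at e1 e2 e3 f1 f2 f3
  all_goals try (exact absurd (by decide) f1)
  all_goals try (exact absurd (by decide) f2)
  all_goals try (exact absurd (by decide) f3)
  all_goals first
  | exact ⟨_, _, _, _, mkP4 e1 e2 e3 f1 f2 f3, hl _ qa, hl _ qb, hl _ qc, hl _ qd⟩
  | exact lem_end (hx qa).2 (hl _ qb) (hl _ qc) (hl _ qd) e1 e2 e3 f1 f2 f3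
  | exact lem_end (hy qa).2 (hl _ qb) (hl _ qc) (hl _ qd) e1 e2 e3 f1 f2 f3
  | exact lem_end (hx qd).2 (hl _ qc) (hl _ qb) (hl _ qa) e3 e2.symm e1.symm f3 f2 (fun h => f1 h.symm)
  | exact lem_end (hy qd).2 (hl _ qc) (hl _ qb) (hl _ qa) e3 e2.symm e1.symm f3 f2 (fun h => f1 h.symm)
  | exact lem_int (hx qb).1 (hx qb).2 (hl _ qc) (hl _ qd) hvX e2 e3 f3 (hno _) (hno _)
  | exact lem_int (hy qb).1 (hy qb).2 (hl _ qc) (hl _ qd) hvY e2 e3 f3 (hno _) (hno _)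
  | exact lem_int (hx qc).1 (hx qc).2 (hl _ qb) (hl _ qa) hvX e2 e1.symm f1 (hno _) (hno _)
  | exact lem_int (hy qc).1 (hy qc).2 (hl _ qb) (hl _ qa) hvY e2 e1.symm f1 (hno _) (hno _)
  | exact lem_mid hpart hdisj hbip hconn (hx qb).2 (hy qc).2 (hl _ qa) (hl _ qd) e1 e3 f1 f3 f2
  | exact lem_mid hpart' hdisj.symm hbip' hconn (hy qb).2 (hx qc).2 (hl _ qa) (hl _ qd) e1 e3 f1 f3 f2

theorem half {V : Type*} {G : SimpleGraph V} (h2P4 : TwoP4Free G) {v : V} {X Y : Set V}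
    (hpart : X ∪ Y = G.neighborSet v) (hdisj : Disjoint X Y)
    (hXne : X.Nonempty) (hYne : Y.Nonempty)
    (hbip : ∀ a b, G.Adj v a → G.Adj v b → G.Adj a b →
      (a ∈ X ∧ b ∈ Y) ∨ (a ∈ Y ∧ b ∈ X))
    (hconn : (G.induce (G.neighborSet v)).Connected)
    {a b c d : {a : V // a ∉ X ∪ Y} ⊕ Bool} (hA : IsInducedP4 (collapse G X Y) a b c d)
    {b₁ b₂ b₃ b₄ : {a : V // a ∉ X ∪ Y}}
    (hB : IsInducedP4 (collapse G X Y) (.inl b₁) (.inl b₂) (.inl b₃) (.inl b₄))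
    (hAB : ∀ u ∈ ({a, b, c, d} : Set ({a : V // a ∉ X ∪ Y} ⊕ Bool)),
      ∀ w : {a : V // a ∉ X ∪ Y}, (w = b₁ ∨ w = b₂ ∨ w = b₃ ∨ w = b₄) →
        u ≠ .inl w ∧ ¬ (collapse G X Y).Adj u (.inl w)) : False := by
  have hmem : ∀ u, G.Adj v u ↔ u ∈ X ∨ u ∈ Y := by
    intro u
    have : u ∈ X ∪ Y ↔ u ∈ G.neighborSet v := by rw [hpart]
    simpa using this.symm
  have hno : ∀ a : {a : V // a ∉ X ∪ Y}, ¬ G.Adj v a.1 := fun a h => a.2 ((hmem _).1 h)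
  obtain ⟨a', b', c', d', hP, g1, g2, g3, g4⟩ := key
    (P := fun u => ∀ w : {a : V // a ∉ X ∪ Y}, (w = b₁ ∨ w = b₂ ∨ w = b₃ ∨ w = b₄) →
      u ≠ w.1 ∧ ¬ G.Adj u w.1) hpart hdisj hbip hconn hA
    (fun u => u ∈ ({a, b, c, d} : Set ({a : V // a ∉ X ∪ Y} ⊕ Bool))) (by simp)
    (by
      intro a ha w hw
      obtain ⟨h1, h2⟩ := hAB _ ha w hw
      exact ⟨fun h => h1 (congrArg _ (Subtype.ext h)), h2⟩)
    (by
      intro ha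
      refine ⟨fun w hw => ⟨?_, hno w⟩, fun u hu w hw => ⟨?_, ?_⟩⟩ <;>
      have h2 := (hAB _ ha w hw).2 <;> rw [c_xl] at h2
      · rintro rfl
        obtain ⟨u, hu⟩ := hXne
        exact h2 ⟨u, hu, ((hmem u).2 (.inl hu)).symm⟩
      · rintro rfl; exact w.2 (.inl hu)
      · exact fun h => h2 ⟨u, hu, h⟩)
    (by
      intro ha
      refine ⟨fun w hw => ⟨?_, hno w⟩, fun u hu w hw => ⟨?_, ?_⟩⟩ <;>
      have h2 := (hAB _ ha w hw).2 <;> rw [c_yl] at h2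
      · rintro rfl
        obtain ⟨u, hu⟩ := hYne
        exact h2 ⟨u, hu, ((hmem u).2 (.inr hu)).symm⟩
      · rintro rfl; exact w.2 (.inr hu)
      · exact fun h => h2 ⟨u, hu, h⟩)
  obtain ⟨-, -, -, -, -, -, e1, e2, e3, f1, f2, f3⟩ := hB
  refine h2P4 ⟨a', b', c', d', b₁.1, b₂.1, b₃.1, b₄.1, hP, mkP4 e1 e2 e3 f1 f2 f3, ?_⟩
  have tr : ∀ u, (∀ w : {a : V // a ∉ X ∪ Y}, (w = b₁ ∨ w = b₂ ∨ w = b₃ ∨ w = b₄) →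
      u ≠ w.1 ∧ ¬ G.Adj u w.1) → ∀ w ∈ ({b₁.1, b₂.1, b₃.1, b₄.1} : Set V),
        u ≠ w ∧ ¬ G.Adj u w := by
    intro u hu w hw
    simp only [Set.mem_insert_iff, Set.mem_singleton_iff] at hw
    rcases hw with rfl | rfl | rfl | rfl
    · exact hu _ (.inl rfl)
    · exact hu _ (.inr (.inl rfl))
    · exact hu _ (.inr (.inr (.inl rfl)))
    · exact hu _ (.inr (.inr (.inr rfl)))
  intro u hu
  simp only [Set.mem_insert_iff, Set.mem_singleton_iff] at hu
  rcases hu with rfl | rfl | rfl | rfl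
  · exact tr _ g1
  · exact tr _ g2
  · exact tr _ g3
  · exact tr _ g4

theorem stmt4 {V : Type*} [Fintype V] (G : SimpleGraph V) (h2P4 : TwoP4Free G)
    (v : V) (X Y : Set V)
    (hpart : X ∪ Y = G.neighborSet v) (hdisj : Disjoint X Y)
    (hXne : X.Nonempty) (hYne : Y.Nonempty)
    (hbip : ∀ a b, G.Adj v a → G.Adj v b → G.Adj a b →
      (a ∈ X ∧ b ∈ Y) ∨ (a ∈ Y ∧ b ∈ X))
    (hconn : (G.induce (G.neighborSet v)).Connected) :
    TwoP4Free (collapse G X Y) := by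
  rintro ⟨a₁, a₂, a₃, a₄, b₁, b₂, b₃, b₄, hA, hB, hAB⟩
  set A : Set ({a : V // a ∉ X ∪ Y} ⊕ Bool) := {a₁, a₂, a₃, a₄} with hAdef
  set B : Set ({a : V // a ∉ X ∪ Y} ⊕ Bool) := {b₁, b₂, b₃, b₄} with hBdef
  have hold : (∀ u ∈ B, ∃ w, u = .inl w) ∨ (∀ u ∈ A, ∃ w, u = .inl w) := by
    by_contra hcon
    push Not at hcon
    obtain ⟨⟨u, hu, hu'⟩, ⟨w, hw, hw'⟩⟩ := hcon
    obtain ⟨h1, h2⟩ := hAB w hw u hu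
    rcases u with u | u
    · exact hu' u rfl
    rcases w with w | w
    · exact hw' w rfl
    rw [c_rr] at h2
    exact h2 (fun h => h1 (congrArg _ h))
  rcases hold with hold | hold
  · obtain ⟨b₁, rfl⟩ := hold b₁ (by simp [hBdef])
    obtain ⟨b₂, rfl⟩ := hold b₂ (by simp [hBdef])
    obtain ⟨b₃, rfl⟩ := hold b₃ (by simp [hBdef])
    obtain ⟨b₄, rfl⟩ := hold b₄ (by simp [hBdef])
    refine half h2P4 hpart hdisj hXne hYne hbip hconn hA hB (fun u hu w hw => hAB u hu _ ?_)
    rcases hw with rfl | rfl | rfl | rfl <;> simp [hBdef]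
  · obtain ⟨a₁, rfl⟩ := hold a₁ (by simp [hAdef])
    obtain ⟨a₂, rfl⟩ := hold a₂ (by simp [hAdef])
    obtain ⟨a₃, rfl⟩ := hold a₃ (by simp [hAdef])
    obtain ⟨a₄, rfl⟩ := hold a₄ (by simp [hAdef])
    refine half h2P4 hpart hdisj hXne hYne hbip hconn hB hA (fun u hu w hw => ?_)
    have := hAB (.inl w) (by rcases hw with rfl | rfl | rfl | rfl <;> simp [hAdef]) u hu
    exact ⟨this.1.symm, fun h => this.2 h.symm⟩
end

section
/- Let G be a finite simple graph that is 2P4-free, and let v1,…,v7 induce a C7 in G with vertex set N0. Let R be the set of all vertices x outside N0 with N0(x) = {v1, v3}, and let N2 be the set of vertices outside N0 with no neighbor in N0. Then the subgraph of G induced by R∪N2 is P4-free. -/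
theorem stmt5 {V : Type*} [Fintype V] (G : SimpleGraph V) (h2P4 : TwoP4Free G)
    (v : ZMod 7 → V) (hv : IsInducedCycle G 7 v)
    (R : Set V)
    (hR : R = {x | x ∉ Set.range v ∧
      {u | u ∈ Set.range v ∧ G.Adj x u} = {v 1, v 3}})
    (N2 : Set V) (hN2 : N2 = {u | u ∉ Set.range v ∧ ∀ i, ¬ G.Adj u (v i)}) :
    ∀ a b c d : V, a ∈ R ∪ N2 → b ∈ R ∪ N2 → c ∈ R ∪ N2 → d ∈ R ∪ N2 →
      ¬ IsInducedP4 G a b c d := by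
  intro a b c d ha hb hc hd hP
  obtain ⟨hinj, hadj⟩ := hv
  have key : ∀ x ∈ R ∪ N2, ∀ i : ZMod 7, i ≠ 1 → i ≠ 3 → x ≠ v i ∧ ¬ G.Adj x (v i) := by
    intro x hx i h1 h3
    rcases hx with hx | hx
    · rw [hR] at hx
      obtain ⟨hx1, hx2⟩ := hx
      refine ⟨fun h => hx1 ⟨i, h.symm⟩, fun h => ?_⟩
      have hm : v i ∈ {u | u ∈ Set.range v ∧ G.Adj x u} := ⟨⟨i, rfl⟩, h⟩
      rw [hx2] at hm
      rcases hm with hm | hm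
      · exact h1 (hinj hm)
      · exact h3 (hinj hm)
    · rw [hN2] at hx
      exact ⟨fun h => hx.1 ⟨i, h.symm⟩, hx.2 i⟩
  refine h2P4 ⟨a, b, c, d, v 4, v 5, v 6, v 0, hP, ?_, ?_⟩
  · simp only [IsInducedP4, hadj, ne_eq, hinj.eq_iff]
    decide
  · have key2 : ∀ x ∈ R ∪ N2, ∀ w ∈ ({v 4, v 5, v 6, v 0} : Set V), x ≠ w ∧ ¬ G.Adj x w := by
      intro x hx w hw
      rcases hw with rfl | rfl | rfl | rfl
      all_goals exact key x hx _ (by decide) (by decide)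
    intro u hu
    rcases hu with rfl | rfl | rfl | rfl
    all_goals exact key2 _ (by assumption)
end

section
/- Let G be a finite simple graph and let N2 and R be disjoint sets of vertices such that: the subgraph induced by R∪N2 is P4-free; the subgraph induced by R is bipartite; and any two adjacent vertices of R have no common neighbor in R∪N2. Let x and y be adjacent vertices of R, write X' = N(x)∩N2 and Y' = N(y)∩N2, and assume that every vertex of G having a neighbor in X'∪Y' belongs to R∪N2. Then there exist disjoint sets X, Y ⊆ R with x∈X and y∈Y satisfying: (1) every vertex of X∪Y' is adjacent to every vertex of Y∪X'; (2) X and Y are independent sets of G; (3) every neighbor of a vertex of X'∪Y' belongs to X∪Y∪X'∪Y'. -/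
theorem stmt6 {V : Type*} [Fintype V] (G : SimpleGraph V)
    (N2 R : Set V) (hdisj : Disjoint R N2)
    -- the subgraph induced by `R ∪ N2` is `P₄`-free
    (hP4free : ∀ a b c d : V, a ∈ R ∪ N2 → b ∈ R ∪ N2 → c ∈ R ∪ N2 → d ∈ R ∪ N2 →
      ¬ IsInducedP4 G a b c d)
    -- the subgraph induced by `R` is bipartite
    (hbip : ∃ A B : Set V, A ∪ B = R ∧ Disjoint A B ∧
      (∀ a ∈ A, ∀ b ∈ A, ¬ G.Adj a b) ∧ (∀ a ∈ B, ∀ b ∈ B, ¬ G.Adj a b))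
    -- adjacent vertices of `R` have no common neighbor in `R ∪ N2`
    (hnocommon : ∀ a ∈ R, ∀ b ∈ R, G.Adj a b →
      ∀ w ∈ R ∪ N2, ¬ (G.Adj w a ∧ G.Adj w b))
    (x y : V) (hx : x ∈ R) (hy : y ∈ R) (hxy : G.Adj x y)
    -- every vertex with a neighbor in `X' ∪ Y'` belongs to `R ∪ N2`
    (hclosed : ∀ w u : V,
      u ∈ (G.neighborSet x ∩ N2) ∪ (G.neighborSet y ∩ N2) → G.Adj w u → w ∈ R ∪ N2) :
    ∃ X Y : Set V, Disjoint X Y ∧ X ⊆ R ∧ Y ⊆ R ∧ x ∈ X ∧ y ∈ Y ∧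
      -- (1) every vertex of `X ∪ Y'` is adjacent to every vertex of `Y ∪ X'`
      (∀ a ∈ X ∪ (G.neighborSet y ∩ N2), ∀ b ∈ Y ∪ (G.neighborSet x ∩ N2), G.Adj a b) ∧
      -- (2) `X` and `Y` are independent sets of `G`
      (∀ a ∈ X, ∀ b ∈ X, ¬ G.Adj a b) ∧ (∀ a ∈ Y, ∀ b ∈ Y, ¬ G.Adj a b) ∧
      -- (3) every neighbor of a vertex of `X' ∪ Y'` belongs to `X ∪ Y ∪ X' ∪ Y'`
      (∀ u ∈ (G.neighborSet x ∩ N2) ∪ (G.neighborSet y ∩ N2), ∀ w : V, G.Adj u w →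
        w ∈ X ∪ Y ∪ (G.neighborSet x ∩ N2) ∪ (G.neighborSet y ∩ N2)) := by
  have hnc : ∀ w ∈ R ∪ N2, ¬ (G.Adj w x ∧ G.Adj w y) := hnocommon x hx y hy hxy
  have hxU : x ∈ R ∪ N2 := Or.inl hx
  have hyU : y ∈ R ∪ N2 := Or.inl hy
  have key : ∀ a ∈ R ∪ N2, ∀ b ∈ R ∪ N2, G.Adj y a → G.Adj x b → G.Adj a b := by
    intro a ha b hb hya hxb
    by_contra hab
    by_cases hax : a = x
    · subst hax; exact hab hxb
    by_cases hby : b = y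
    · subst hby; exact hab hya.symm
    have h1 : ¬ G.Adj a x := fun h => hnc a ha ⟨h, hya.symm⟩
    have h2 : ¬ G.Adj b y := fun h => hnc b hb ⟨hxb.symm, h⟩
    have h3 : a ≠ b := by
      rintro rfl
      exact h1 hxb.symm
    exact hP4free a y x b ha hyU hxU hb
      ⟨hya.ne', hax, h3, hxy.ne', fun h => hby h.symm, hxb.ne, hya.symm, hxy.symm, hxb,
        h1, hab, fun h => h2 h.symm⟩
  have key3 : ∀ u ∈ R ∪ N2, ∀ w ∈ R ∪ N2, (G.Adj x u ∨ G.Adj y u) → G.Adj u w →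
      G.Adj x w ∨ G.Adj y w := by
    intro u hu w hw h huw
    by_contra! hcon
    obtain ⟨hxw, hyw⟩ := hcon
    have hwx : w ≠ x := by
      rintro rfl
      exact hyw hxy.symm
    have hwy : w ≠ y := by
      rintro rfl
      exact hxw hxy
    rcases h with h | h
    · have huy : ¬ G.Adj u y := fun h' => hnc u hu ⟨h.symm, h'⟩
      have : u ≠ y := by
        rintro rfl
        exact hyw huw
      exact hP4free w u x y hw hu hxU hyU
        ⟨huw.ne', hwx, hwy, h.ne', this, hxy.ne, huw.symm, h.symm, hxy,
          fun h => hxw h.symm, fun h => hyw h.symm, huy⟩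
    · have hux : ¬ G.Adj u x := fun h' => hnc u hu ⟨h', h.symm⟩
      have : u ≠ x := by
        rintro rfl
        exact hxw huw
      exact hP4free w u y x hw hu hyU hxU
        ⟨huw.ne', hwy, hwx, h.ne', this, hxy.ne', huw.symm, h.symm, hxy.symm,
          fun h => hyw h.symm, fun h => hxw h.symm, hux⟩
  refine ⟨G.neighborSet y ∩ R, G.neighborSet x ∩ R, ?_, fun _ h => h.2, fun _ h => h.2,
    ⟨hxy.symm, hx⟩, ⟨hxy, hy⟩, ?_, ?_, ?_, ?_⟩
  · rw [Set.disjoint_left]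
    rintro a ⟨h1, h2⟩ ⟨h3, -⟩
    exact hnc a (Or.inl h2) ⟨G.adj_symm h3, G.adj_symm h1⟩
  · rintro a (⟨h1, h2⟩ | ⟨h1, h2⟩) b (⟨h3, h4⟩ | ⟨h3, h4⟩)
    · exact key a (Or.inl h2) b (Or.inl h4) h1 h3
    · exact key a (Or.inl h2) b (Or.inr h4) h1 h3
    · exact key a (Or.inr h2) b (Or.inl h4) h1 h3
    · exact key a (Or.inr h2) b (Or.inr h4) h1 h3
  · rintro a ⟨h1, h2⟩ b ⟨h3, h4⟩ hab
    exact hnocommon a h2 b h4 hab y hyU ⟨h1, h3⟩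
  · rintro a ⟨h1, h2⟩ b ⟨h3, h4⟩ hab
    exact hnocommon a h2 b h4 hab x hxU ⟨h1, h3⟩
  · intro u hu w huw
    have hw := hclosed w u hu huw.symm
    have hu2 : u ∈ R ∪ N2 := hu.elim (fun h => Or.inr h.2) (fun h => Or.inr h.2)
    have := key3 u hu2 w hw (hu.imp (fun h => h.1) (fun h => h.1)) huw
    simp only [Set.mem_union, Set.mem_inter_iff, SimpleGraph.mem_neighborSet] at hw ⊢
    tauto
end

section
/- Let G be a finite simple graph that is 2P4-free, let v1,…,v7 induce a C7 in G with vertex set N0, and let N2 be the set of vertices outside N0 with no neighbor in N0. Let R be a set of vertices, each satisfying N0(x) = {v1, v3}, such that R is an independent set of G. For a vertex x, let C2(x) denote the set of connected components of the subgraph induced by N2 that contain at least one neighbor of x. Then for any two vertices x, y ∈ R, either C2(x) = C2(y) or C2(x) and C2(y) are disjoint. -/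
theorem bdry {V : Type*} {G : SimpleGraph V} {C : Set V} (hc : (G.induce C).Connected)
    (P : V → Prop) {a b : V} (ha : a ∈ C) (hb : b ∈ C) (pa : P a) (pb : ¬ P b) :
    ∃ p ∈ C, ∃ q ∈ C, P p ∧ ¬ P q ∧ G.Adj p q := by
  obtain ⟨w⟩ := hc.preconnected ⟨a, ha⟩ ⟨b, hb⟩
  obtain ⟨d, -, h1, h2⟩ := w.exists_boundary_dart {z | P z.1} pa pb
  exact ⟨d.fst.1, d.fst.2, d.snd.1, d.snd.2, h1, h2, d.adj⟩

theorem key_s7 {V : Type*} (G : SimpleGraph V) (N2 : Set V) (x y : V)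
    (hx : x ∉ N2) (hy : y ∉ N2) (hxy : ¬ G.Adj x y)
    (hP : ∀ a b c d, (a ∈ N2 ∨ a = x ∨ a = y) → (b ∈ N2 ∨ b = x ∨ b = y) →
      (c ∈ N2 ∨ c = x ∨ c = y) → (d ∈ N2 ∨ d = x ∨ d = y) → ¬ IsInducedP4 G a b c d)
    (C D : Set V) (hC : IsCompOf G N2 C) (hD : IsCompOf G N2 D)
    (hCx : ∃ u ∈ C, G.Adj x u) (hCy : ∃ u ∈ C, G.Adj y u) (hDx : ∃ u ∈ D, G.Adj x u) :
    ∃ u ∈ D, G.Adj y u := by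
  by_contra hno
  push Not at hno
  obtain ⟨d, hd, hxd⟩ := hDx
  obtain ⟨c, hc, hxc⟩ := hCx
  obtain ⟨e, he, hye⟩ := hCy
  obtain ⟨-, hCN, hCc, hCm⟩ := hC
  obtain ⟨-, hDN, hDc, hDm⟩ := hD
  have heD : e ∉ D := fun h => hno e h hye
  have hdC : d ∉ C := by
    intro h
    obtain ⟨p, hp, q, hq, h1, h2, h3⟩ := bdry hCc (· ∈ D) h he hd heD
    exact h2 (hDm p h1 q (hCN hq) h3)
  have hdn : ∀ c ∈ C, ¬ G.Adj d c := fun c hc h => hdC (hCm c hc d (hDN hd) h.symm)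
  have hne : ∀ c ∈ C, d ≠ c := fun c hc h => hdC (h ▸ hc)
  have hnx : ∀ c ∈ N2, x ≠ c := fun c hc h => hx (h ▸ hc)
  have hny : ∀ c ∈ N2, c ≠ y := fun c hc h => hy (h ▸ hc)
  have hyd := hno d hd
  have hxny : x ≠ y := by rintro rfl; exact hyd hxd
  by_cases hxe : G.Adj x e
  · exact hP d x e y (Or.inl (hDN hd)) (by simp) (Or.inl (hCN he)) (by simp)
      ⟨(hnx d (hDN hd)).symm, hne e he, hny d (hDN hd), hnx e (hCN he), hxny,
        hny e (hCN he), hxd.symm, hxe, hye.symm, hdn e he, fun h => hyd h.symm, hxy⟩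
  · obtain ⟨p, hp, q, hq, h1, h2, h3⟩ := bdry hCc (G.Adj x) hc he hxc hxe
    exact hP d x p q (Or.inl (hDN hd)) (by simp) (Or.inl (hCN hp)) (Or.inl (hCN hq))
      ⟨(hnx d (hDN hd)).symm, hne p hp, hne q hq, hnx p (hCN hp), hnx q (hCN hq),
        h3.ne, hxd.symm, h1, h3, hdn p hp, hdn q hq, h2⟩

theorem stmt7 {V : Type*} [Fintype V] (G : SimpleGraph V) (h2P4 : TwoP4Free G)
    (v : ZMod 7 → V) (hv : IsInducedCycle G 7 v)
    (N2 : Set V) (hN2 : N2 = {u | u ∉ Set.range v ∧ ∀ i, ¬ G.Adj u (v i)})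
    (R : Set V)
    (hR : ∀ x ∈ R, x ∉ Set.range v ∧
      {u | u ∈ Set.range v ∧ G.Adj x u} = {v 1, v 3})
    (hind : ∀ a ∈ R, ∀ b ∈ R, ¬ G.Adj a b)
    (C2 : V → Set (Set V))
    (hC2 : ∀ x : V, C2 x = {C | IsCompOf G N2 C ∧ ∃ u ∈ C, G.Adj x u})
    (x y : V) (hx : x ∈ R) (hy : y ∈ R) :
    C2 x = C2 y ∨ Disjoint (C2 x) (C2 y) := by
  have hRN : ∀ z ∈ R, z ∉ N2 := by
    intro z hz h
    have h1 : v 1 ∈ {u | u ∈ Set.range v ∧ G.Adj z u} := by rw [(hR z hz).2]; simp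
    rw [hN2] at h
    exact h.2 1 h1.2
  have hfar : ∀ z, (z ∈ N2 ∨ z ∈ R) → ∀ i : ZMod 7, i ≠ 1 → i ≠ 3 → z ≠ v i ∧ ¬ G.Adj z (v i) := by
    rintro z (hz | hz) i h1 h3
    · rw [hN2] at hz
      exact ⟨fun h => hz.1 ⟨i, h.symm⟩, hz.2 i⟩
    · refine ⟨fun h => (hR z hz).1 ⟨i, h.symm⟩, fun h => ?_⟩
      have : v i ∈ ({v 1, v 3} : Set V) := by rw [← (hR z hz).2]; exact ⟨⟨i, rfl⟩, h⟩
      rcases this with h | h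
      · exact h1 (hv.1 h)
      · exact h3 (hv.1 h)
  have hQ : IsInducedP4 G (v 4) (v 5) (v 6) (v 0) := by
    refine ⟨hv.1.ne (by decide), hv.1.ne (by decide), hv.1.ne (by decide), hv.1.ne (by decide),
      hv.1.ne (by decide), hv.1.ne (by decide), ?_, ?_, ?_, ?_, ?_, ?_⟩ <;>
      rw [hv.2] <;> decide
  have hP : ∀ a b c d, (a ∈ N2 ∨ a ∈ R) → (b ∈ N2 ∨ b ∈ R) →
      (c ∈ N2 ∨ c ∈ R) → (d ∈ N2 ∨ d ∈ R) → ¬ IsInducedP4 G a b c d := by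
    intro a b c d ha hb hc hd h
    refine h2P4 ⟨a, b, c, d, _, _, _, _, h, hQ, ?_⟩
    intro u hu w hw
    have hu' : u ∈ N2 ∨ u ∈ R := by
      rcases hu with rfl | rfl | rfl | rfl <;> assumption
    rcases hw with rfl | rfl | rfl | rfl <;> exact hfar u hu' _ (by decide) (by decide)
  have main : ∀ x ∈ R, ∀ y ∈ R, ∀ C ∈ C2 x, C ∈ C2 y → C2 x ⊆ C2 y := by
    intro x hx y hy C h1 h2 D h3
    rw [hC2] at h1 h2 h3 ⊢
    have hm : ∀ a, (a ∈ N2 ∨ a = x ∨ a = y) → (a ∈ N2 ∨ a ∈ R) := by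
      rintro a (h | rfl | rfl)
      · exact Or.inl h
      · exact Or.inr hx
      · exact Or.inr hy
    exact ⟨h3.1, key_s7 G N2 x y (hRN x hx) (hRN y hy) (hind x hx y hy)
      (fun a b c d ha hb hc hd => hP a b c d (hm a ha) (hm b hb) (hm c hc) (hm d hd))
      C D h1.1 h3.1 h1.2 h2.2 h3.2⟩
  by_cases h : Disjoint (C2 x) (C2 y)
  · exact Or.inr h
  · rw [Set.not_disjoint_iff] at h
    obtain ⟨C, h1, h2⟩ := h
    exact Or.inl (Set.Subset.antisymm (main x hx y hy C h1 h2) (main y hy x hx C h2 h1))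
end

section
/- Let G be a finite simple graph, let N2 be a set of vertices, and let C be a connected component of the subgraph induced by N2. Let x be a vertex outside N2 such that all neighbors of x in N2 lie in C and x has at least one neighbor in C. Let y be a vertex distinct from and non-adjacent to x such that either y ∈ C, or y is outside N2 and has at least one neighbor in N2, all of whose N2-neighbors lie in C. Assume the subgraph of G induced by C∪{x,y} contains no induced path on 4 vertices. Then y is adjacent to at least one vertex of N(x)∩C; moreover, if the subgraph induced by N(x)∩C is disconnected, then y is adjacent to every vertex of N(x)∩C. -/
theorem stmt8 {V : Type*} [Fintype V] (G : SimpleGraph V)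
    (N2 C : Set V) (hC : IsCompOf G N2 C)
    (x : V) (hxN2 : x ∉ N2)
    (hxall : ∀ u ∈ N2, G.Adj x u → u ∈ C) (hxC : ∃ u ∈ C, G.Adj x u)
    (y : V) (hyx : y ≠ x) (hyadj : ¬ G.Adj x y)
    (hy : y ∈ C ∨
      (y ∉ N2 ∧ (∃ u ∈ N2, G.Adj y u) ∧ ∀ u ∈ N2, G.Adj y u → u ∈ C))
    -- the subgraph induced by `C ∪ {x, y}` contains no induced `P₄`
    (hP4 : ∀ a b c d : V, a ∈ C ∪ {x, y} → b ∈ C ∪ {x, y} → c ∈ C ∪ {x, y} →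
      d ∈ C ∪ {x, y} → ¬ IsInducedP4 G a b c d) :
    (∃ u ∈ G.neighborSet x ∩ C, G.Adj y u) ∧
      (¬ (G.induce (G.neighborSet x ∩ C)).Connected →
        ∀ u ∈ G.neighborSet x ∩ C, G.Adj y u) := by
  obtain ⟨-, hCS, hconn, -⟩ := hC
  have hxC' : x ∉ C := fun h => hxN2 (hCS h)
  obtain ⟨u0, hu0, hxu0⟩ := hxC
  have step : ∀ v w : V, v ∈ C → (w ∈ C ∨ w = y) → w ≠ x → G.Adj v w →
      (G.Adj x v ∨ ∃ u ∈ C, G.Adj x u ∧ G.Adj u v) →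
      (G.Adj x w ∨ ∃ u ∈ C, G.Adj x u ∧ G.Adj u w) := by
    intro v w hv hw hwx hvw h
    rcases h with h | ⟨u, hu, hxu, huv⟩
    · exact Or.inr ⟨v, hv, h, hvw⟩
    · by_contra hcon
      push Not at hcon
      obtain ⟨h1, h2⟩ := hcon
      have h3 : ¬ G.Adj x v := fun h => h2 v hv h hvw
      have h4 := h2 u hu hxu
      refine hP4 x u v w (by simp) (by simp [hu]) (by simp [hv])
        (by rcases hw with h | h <;> simp [h]) ⟨hxu.ne, ?_, hwx.symm, huv.ne, ?_, hvw.ne,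
          hxu, huv, hvw, h3, h1, h4⟩
      · rintro rfl; exact hxC' hv
      · rintro rfl; exact h1 hxu
  have hall : ∀ v : C, (G.Adj x v ∨ ∃ u ∈ C, G.Adj x u ∧ G.Adj u v) := by
    intro v
    obtain ⟨p⟩ := hconn.preconnected ⟨u0, hu0⟩ v
    have key : ∀ a b : C, (G.induce C).Walk a b →
        (G.Adj x a ∨ ∃ u ∈ C, G.Adj x u ∧ G.Adj u a) →
        (G.Adj x b ∨ ∃ u ∈ C, G.Adj x u ∧ G.Adj u b) := by
      intro a b p
      induction p with
      | nil => exact id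
      | cons h p ih =>
        intro ha
        refine ih (step _ _ (Subtype.property _) (Or.inl (Subtype.property _)) ?_ h ha)
        intro he
        exact hxC' (he ▸ Subtype.property _)
    exact key _ _ p (Or.inl hxu0)
  have hyP : ∃ u ∈ C, G.Adj x u ∧ G.Adj u y := by
    rcases hy with hy | ⟨-, ⟨u, hu, hyu⟩, hyall⟩
    · exact (hall ⟨y, hy⟩).resolve_left hyadj
    · have huC := hyall u hu hyu
      exact (step u y huC (Or.inr rfl) hyx hyu.symm (hall ⟨u, huC⟩)).resolve_left hyadj
  obtain ⟨a, haC, hxa, hay⟩ := hyP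
  refine ⟨⟨a, ⟨hxa, haC⟩, hay.symm⟩, ?_⟩
  intro hdis b hb
  by_contra hyb
  apply hdis
  have cross : ∀ c d : V, c ∈ C → d ∈ C → G.Adj x c → G.Adj x d → G.Adj y c → ¬ G.Adj y d →
      G.Adj c d := by
    intro c d hc hd hxc hxd hyc hyd
    by_contra hcd
    refine hP4 y c x d (by simp) (by simp [hc]) (by simp) (by simp [hd])
      ⟨hyc.ne, hyx, ?_, hxc.ne.symm, ?_, hxd.ne, hyc, hxc.symm, hxd,
        fun h => hyadj h.symm, hyd, hcd⟩
    · rintro rfl; exact hyadj hxd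
    · rintro rfl; exact hyd hyc
  have hab := cross a b haC hb.2 hxa hb.1 hay.symm hyb
  have reach : ∀ c : ↥(G.neighborSet x ∩ C),
      (G.induce (G.neighborSet x ∩ C)).Reachable c ⟨b, hb⟩ := by
    rintro ⟨c, hc⟩
    by_cases hyc : G.Adj y c
    · apply SimpleGraph.Adj.reachable
      exact cross c b hc.2 hb.2 hc.1 hb.1 hyc hyb
    · have h1 : (G.induce (G.neighborSet x ∩ C)).Adj ⟨c, hc⟩ ⟨a, hxa, haC⟩ :=
        (cross a c haC hc.2 hxa hc.1 hay.symm hyc).symm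
      have h2 : (G.induce (G.neighborSet x ∩ C)).Adj ⟨a, hxa, haC⟩ ⟨b, hb⟩ := hab
      exact h1.reachable.trans h2.reachable
  haveI : Nonempty ↥(G.neighborSet x ∩ C) := ⟨⟨b, hb⟩⟩
  exact SimpleGraph.Connected.mk fun c d => (reach c).trans (reach d).symm
end

section
/- Let G be a finite simple graph that is 2P4-free, let v1,…,v7 induce a C7 in G with vertex set N0, and let N2 be the set of vertices outside N0 with no neighbor in N0. Let x and y be distinct vertices with N0(x) = N0(y) = {v_i} for some index i. Then N(x)∩N2 and N(y)∩N2 are comparable by inclusion, i.e., N(x)∩N2 ⊆ N(y)∩N2 or N(y)∩N2 ⊆ N(x)∩N2. -/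
lemma aux_path {V : Type*} (G : SimpleGraph V) (h2P4 : TwoP4Free G)
    (v : ZMod 7 → V) (hv : IsInducedCycle G 7 v) (i : ZMod 7) (a b c d : V)
    (hP : IsInducedP4 G a b c d)
    (hfar : ∀ u ∈ ({a, b, c, d} : Set V), ∀ j : ZMod 7, j ≠ i → j ≠ i + 1 → j ≠ i + 6 →
      u ≠ v j ∧ ¬ G.Adj u (v j)) : False := by
  obtain ⟨hinj, hadj⟩ := hv
  refine h2P4 ⟨a, b, c, d, v (i+2), v (i+3), v (i+4), v (i+5), hP, ?_, ?_⟩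
  · unfold IsInducedP4
    simp only [ne_eq, hinj.eq_iff, hadj]
    clear * -; revert i; decide
  · intro u hu w hw
    simp only [Set.mem_insert_iff, Set.mem_singleton_iff] at hw
    rcases hw with rfl | rfl | rfl | rfl <;> apply hfar u hu <;> clear hfar <;> revert i <;> decide

lemma aux_single {V : Type*} (G : SimpleGraph V)
    (v : ZMod 7 → V) (hv : IsInducedCycle G 7 v) (i : ZMod 7) (x : V)
    (hx : {u | u ∈ Set.range v ∧ G.Adj x u} = {v i}) :
    (∀ j, x ≠ v j) ∧ (∀ j, G.Adj x (v j) ↔ j = i) := by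
  obtain ⟨hinj, hadj⟩ := hv
  have h : ∀ j, G.Adj x (v j) ↔ j = i := by
    intro j
    have := Set.ext_iff.1 hx (v j)
    simpa [hinj.eq_iff] using this
  refine ⟨?_, h⟩
  rintro k rfl
  have h1 := (h (k+1)).1 ((hadj _ _).2 (Or.inl rfl))
  have h2 := (h (k+6)).1 ((hadj _ _).2 (Or.inr (by clear * -; revert k; decide)))
  have h3 : k + 1 = k + 6 := h1.trans h2.symm
  clear * - h3
  revert k; decide

theorem stmt10 {V : Type*} [Fintype V] (G : SimpleGraph V) (h2P4 : TwoP4Free G)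
    (v : ZMod 7 → V) (hv : IsInducedCycle G 7 v)
    (N2 : Set V) (hN2 : N2 = {u | u ∉ Set.range v ∧ ∀ j, ¬ G.Adj u (v j)})
    (x y : V) (hxy : x ≠ y) (i : ZMod 7)
    (hx : {u | u ∈ Set.range v ∧ G.Adj x u} = {v i})
    (hy : {u | u ∈ Set.range v ∧ G.Adj y u} = {v i}) :
    G.neighborSet x ∩ N2 ⊆ G.neighborSet y ∩ N2 ∨
      G.neighborSet y ∩ N2 ⊆ G.neighborSet x ∩ N2 := by
  obtain ⟨hxv, hxa⟩ := aux_single G v hv i x hx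
  obtain ⟨hyv, hya⟩ := aux_single G v hv i y hy
  by_contra hcon
  rw [not_or, Set.not_subset, Set.not_subset] at hcon
  obtain ⟨⟨p, ⟨hxp, hp⟩, hp'⟩, ⟨q, ⟨hyq, hq⟩, hq'⟩⟩ := hcon
  have hyp : ¬ G.Adj y p := fun h => hp' ⟨h, hp⟩
  have hxq : ¬ G.Adj x q := fun h => hq' ⟨h, hq⟩
  rw [SimpleGraph.mem_neighborSet] at hxp hyq
  subst hN2
  obtain ⟨hpr, hpa⟩ := hp
  obtain ⟨hqr, hqa⟩ := hq
  have hpv : ∀ j, p ≠ v j := fun j h => hpr ⟨j, h.symm⟩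
  have hqv : ∀ j, q ≠ v j := fun j h => hqr ⟨j, h.symm⟩
  have hpq : p ≠ q := by rintro rfl; exact hyp hyq
  have hxp' := hxp.ne
  have hyq' := hyq.ne
  have fx : ∀ j : ZMod 7, j ≠ i → j ≠ i + 1 → j ≠ i + 6 → x ≠ v j ∧ ¬ G.Adj x (v j) :=
    fun j h _ _ => ⟨hxv j, fun h' => h ((hxa j).1 h')⟩
  have fy : ∀ j : ZMod 7, j ≠ i → j ≠ i + 1 → j ≠ i + 6 → y ≠ v j ∧ ¬ G.Adj y (v j) :=
    fun j h _ _ => ⟨hyv j, fun h' => h ((hya j).1 h')⟩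
  have fp : ∀ j : ZMod 7, j ≠ i → j ≠ i + 1 → j ≠ i + 6 → p ≠ v j ∧ ¬ G.Adj p (v j) :=
    fun j _ _ _ => ⟨hpv j, hpa j⟩
  have fq : ∀ j : ZMod 7, j ≠ i → j ≠ i + 1 → j ≠ i + 6 → q ≠ v j ∧ ¬ G.Adj q (v j) :=
    fun j _ _ _ => ⟨hqv j, hqa j⟩
  have fv : ∀ j : ZMod 7, j ≠ i → j ≠ i + 1 → j ≠ i + 6 → v i ≠ v j ∧ ¬ G.Adj (v i) (v j) := by
    obtain ⟨hinj, hadj⟩ := hv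
    simp only [ne_eq, hinj.eq_iff, hadj]
    clear * -
    clear * -; revert i; decide
  have hxi := (hxa i).2 rfl
  have hyi := (hya i).2 rfl
  have hpi := hpa i
  have hqi := hqa i
  have hpvi := hpv i
  have hqvi := hqv i
  have hxvi := hxv i
  have hyvi := hyv i
  have hxq' : x ≠ q := by rintro rfl; exact hqi hxi
  have hyp' : y ≠ p := by rintro rfl; exact hpi hyi
  by_cases h1 : G.Adj x y <;> by_cases h2 : G.Adj p q
  · refine aux_path G h2P4 v hv i (v i) x p q ?_ ?_
    · unfold IsInducedP4
      clear * - hxy hxp hyq hyp hxq hpq hxp' hyq' hxi hyi hpi hqi hpvi hqvi hxvi hyvi hxq' hyp' h1 h2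
      grind [G.adj_comm]
    · rintro u (rfl | rfl | rfl | rfl) <;> assumption
  · refine aux_path G h2P4 v hv i p x y q ?_ ?_
    · unfold IsInducedP4
      clear * - hxy hxp hyq hyp hxq hpq hxp' hyq' hxi hyi hpi hqi hpvi hqvi hxvi hyvi hxq' hyp' h1 h2
      grind [G.adj_comm]
    · rintro u (rfl | rfl | rfl | rfl) <;> assumption
  · refine aux_path G h2P4 v hv i x p q y ?_ ?_
    · unfold IsInducedP4
      clear * - hxy hxp hyq hyp hxq hpq hxp' hyq' hxi hyi hpi hqi hpvi hqvi hxvi hyvi hxq' hyp' h1 h2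
      grind [G.adj_comm]
    · rintro u (rfl | rfl | rfl | rfl) <;> assumption
  · refine aux_path G h2P4 v hv i p x (v i) y ?_ ?_
    · unfold IsInducedP4
      clear * - hxy hxp hyq hyp hxq hpq hxp' hyq' hxi hyi hpi hqi hpvi hqvi hxvi hyvi hxq' hyp' h1 h2
      grind [G.adj_comm]
    · rintro u (rfl | rfl | rfl | rfl) <;> assumption
end

section
/- Let G be a finite simple graph that is 2P4-free, let v1,…,v7 induce a C7 in G with vertex set N0 (indices modulo 7), and let N2 be the set of vertices outside N0 with no neighbor in N0. Fix an index i. Let x be a vertex with N0(x) equal to {v_i, v_{i+2}} or {v_{i-2}, v_i}, and let y be a vertex with N0(y) equal to {v_{i+3}, v_{i+5}} or {v_{i+1}, v_{i+3}}, such that x and y are non-adjacent. Let x' be a vertex of N2 adjacent to x but not to y, and let y' be a vertex of N2 adjacent to y but not to x. Then x' and y' are adjacent. -/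
lemma stmt11_core {V : Type*} (G : SimpleGraph V) (h2P4 : TwoP4Free G)
    (x y x' y' a b c d : V)
    (hxy : ¬ G.Adj x y) (hxx' : G.Adj x x') (hyx' : ¬ G.Adj y x')
    (hyy' : G.Adj y y') (hxy' : ¬ G.Adj x y')
    (xa : G.Adj x a) (xb : ¬ G.Adj x b) (xc : ¬ G.Adj x c) (xd : ¬ G.Adj x d)
    (ya : ¬ G.Adj y a) (yb : ¬ G.Adj y b) (yc : G.Adj y c) (yd : ¬ G.Adj y d)
    (ab : G.Adj a b) (ac : ¬ G.Adj a c) (ad : ¬ G.Adj a d)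
    (bc : ¬ G.Adj b c) (bd : ¬ G.Adj b d) (cd : G.Adj c d)
    (x'a : ¬ G.Adj x' a) (x'b : ¬ G.Adj x' b) (x'c : ¬ G.Adj x' c) (x'd : ¬ G.Adj x' d)
    (y'a : ¬ G.Adj y' a) (y'b : ¬ G.Adj y' b) (y'c : ¬ G.Adj y' c) (y'd : ¬ G.Adj y' d) :
    G.Adj x' y' := by
  by_contra hn
  apply h2P4
  have sy : ∀ {u w : V}, G.Adj u w → G.Adj w u := fun h => h.symm
  have ir : ∀ u : V, ¬ G.Adj u u := fun u => G.irrefl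
  refine ⟨x', x, a, b, y', y, c, d, ?_, ?_, ?_⟩
  · refine ⟨?_, ?_, ?_, ?_, ?_, ?_, hxx'.symm, xa, ab, x'a, x'b, xb⟩ <;> rintro rfl <;> grind
  · refine ⟨?_, ?_, ?_, ?_, ?_, ?_, hyy'.symm, yc, cd, y'c, y'd, yd⟩ <;> rintro rfl <;> grind
  · intro u hu w hw
    simp only [Set.mem_insert_iff, Set.mem_singleton_iff] at hu hw
    rcases hu with rfl | rfl | rfl | rfl <;> rcases hw with rfl | rfl | rfl | rfl <;>
      refine ⟨?_, ?_⟩ <;> first | (rintro rfl; grind) | grind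

lemma stmt11_nb {V : Type*} (G : SimpleGraph V) (v : ZMod 7 → V) (hv : Function.Injective v)
    (x : V) (p q : ZMod 7) (h : {u | u ∈ Set.range v ∧ G.Adj x u} = {v p, v q}) (j : ZMod 7) :
    G.Adj x (v j) ↔ j = p ∨ j = q := by
  have := Set.ext_iff.1 h (v j)
  simpa [hv.eq_iff] using this

theorem stmt11 {V : Type*} [Fintype V] (G : SimpleGraph V) (h2P4 : TwoP4Free G)
    (v : ZMod 7 → V) (hv : IsInducedCycle G 7 v)
    (N2 : Set V) (hN2 : N2 = {u | u ∉ Set.range v ∧ ∀ j, ¬ G.Adj u (v j)})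
    (i : ZMod 7) (x y : V)
    (hx : {u | u ∈ Set.range v ∧ G.Adj x u} = {v i, v (i + 2)} ∨
          {u | u ∈ Set.range v ∧ G.Adj x u} = {v (i - 2), v i})
    (hy : {u | u ∈ Set.range v ∧ G.Adj y u} = {v (i + 3), v (i + 5)} ∨
          {u | u ∈ Set.range v ∧ G.Adj y u} = {v (i + 1), v (i + 3)})
    (hxy : ¬ G.Adj x y)
    (x' : V) (hx'N2 : x' ∈ N2) (hxx' : G.Adj x x') (hyx' : ¬ G.Adj y x')
    (y' : V) (hy'N2 : y' ∈ N2) (hyy' : G.Adj y y') (hxy' : ¬ G.Adj x y') :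
    G.Adj x' y' := by
  subst hN2
  obtain ⟨inj, A⟩ := hv
  have h1 := hx'N2.2
  have h2 := hy'N2.2
  rcases hx with hx | hx <;> rcases hy with hy | hy <;>
    have X := stmt11_nb G v inj x _ _ hx <;> have Y := stmt11_nb G v inj y _ _ hy
  · exact stmt11_core G h2P4 x y x' y' (v (i + 0)) (v (i + 1)) (v (i + 5)) (v (i + 4))
      hxy hxx' hyx' hyy' hxy'
      (by rw [X]; clear * -; revert i; decide) (by rw [X]; clear * -; revert i; decide)
      (by rw [X]; clear * -; revert i; decide) (by rw [X]; clear * -; revert i; decide)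
      (by rw [Y]; clear * -; revert i; decide) (by rw [Y]; clear * -; revert i; decide)
      (by rw [Y]; clear * -; revert i; decide) (by rw [Y]; clear * -; revert i; decide)
      (by rw [A]; clear * -; revert i; decide) (by rw [A]; clear * -; revert i; decide)
      (by rw [A]; clear * -; revert i; decide) (by rw [A]; clear * -; revert i; decide)
      (by rw [A]; clear * -; revert i; decide) (by rw [A]; clear * -; revert i; decide)
      (h1 _) (h1 _) (h1 _) (h1 _) (h2 _) (h2 _) (h2 _) (h2 _)
  · exact stmt11_core G h2P4 x y x' y' (v (i + 0)) (v (i + 6)) (v (i + 3)) (v (i + 4))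
      hxy hxx' hyx' hyy' hxy'
      (by rw [X]; clear * -; revert i; decide) (by rw [X]; clear * -; revert i; decide)
      (by rw [X]; clear * -; revert i; decide) (by rw [X]; clear * -; revert i; decide)
      (by rw [Y]; clear * -; revert i; decide) (by rw [Y]; clear * -; revert i; decide)
      (by rw [Y]; clear * -; revert i; decide) (by rw [Y]; clear * -; revert i; decide)
      (by rw [A]; clear * -; revert i; decide) (by rw [A]; clear * -; revert i; decide)
      (by rw [A]; clear * -; revert i; decide) (by rw [A]; clear * -; revert i; decide)
      (by rw [A]; clear * -; revert i; decide) (by rw [A]; clear * -; revert i; decide)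
      (h1 _) (h1 _) (h1 _) (h1 _) (h2 _) (h2 _) (h2 _) (h2 _)
  · exact stmt11_core G h2P4 x y x' y' (v (i + 0)) (v (i + 1)) (v (i + 3)) (v (i + 4))
      hxy hxx' hyx' hyy' hxy'
      (by rw [X]; clear * -; revert i; decide) (by rw [X]; clear * -; revert i; decide)
      (by rw [X]; clear * -; revert i; decide) (by rw [X]; clear * -; revert i; decide)
      (by rw [Y]; clear * -; revert i; decide) (by rw [Y]; clear * -; revert i; decide)
      (by rw [Y]; clear * -; revert i; decide) (by rw [Y]; clear * -; revert i; decide)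
      (by rw [A]; clear * -; revert i; decide) (by rw [A]; clear * -; revert i; decide)
      (by rw [A]; clear * -; revert i; decide) (by rw [A]; clear * -; revert i; decide)
      (by rw [A]; clear * -; revert i; decide) (by rw [A]; clear * -; revert i; decide)
      (h1 _) (h1 _) (h1 _) (h1 _) (h2 _) (h2 _) (h2 _) (h2 _)
  · exact stmt11_core G h2P4 x y x' y' (v (i + 0)) (v (i + 6)) (v (i + 3)) (v (i + 4))
      hxy hxx' hyx' hyy' hxy'
      (by rw [X]; clear * -; revert i; decide) (by rw [X]; clear * -; revert i; decide)
      (by rw [X]; clear * -; revert i; decide) (by rw [X]; clear * -; revert i; decide)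
      (by rw [Y]; clear * -; revert i; decide) (by rw [Y]; clear * -; revert i; decide)
      (by rw [Y]; clear * -; revert i; decide) (by rw [Y]; clear * -; revert i; decide)
      (by rw [A]; clear * -; revert i; decide) (by rw [A]; clear * -; revert i; decide)
      (by rw [A]; clear * -; revert i; decide) (by rw [A]; clear * -; revert i; decide)
      (by rw [A]; clear * -; revert i; decide) (by rw [A]; clear * -; revert i; decide)
      (h1 _) (h1 _) (h1 _) (h1 _) (h2 _) (h2 _) (h2 _) (h2 _)
end
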